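/- For every binary head tree T with n leaves and every subtree S of T whose span is the interval {i,…,j}, the arc set arcs(S) forms a dependency tree on the positions {i,…,j} rooted at head(S): head(S) lies in {i,…,j}, every position in {i,…,j} other than head(S) has exactly one incoming arc in arcs(S), and every position in {i,…,j} reaches head(S) by repeatedly following its incoming arc backward. -/

import Mathlib

/-- Binary head trees (BHTs). -/
inductive BHT : Type where
  | leaf : BHT
  | nodeL (l r : BHT) : BHT
  | nodeR (l r : BHT) : BHT

/-- Number of leaves of a BHT. -/
def BHT.numLeaves : BHT → ℕ
  | .leaf => 1
  | .nodeL l r => l.numLeaves + r.numLeaves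
  | .nodeR l r => l.numLeaves + r.numLeaves

/-- Head position of a BHT whose span of leaf positions starts at `i`. -/
def BHT.headAt : BHT → ℕ → ℕ
  | .leaf, i => i
  | .nodeL l _, i => l.headAt i
  | .nodeR l r, i => r.headAt (i + l.numLeaves)

/-- Head position of a BHT placed over positions `0, …, numLeaves - 1`. -/
def BHT.head (T : BHT) : ℕ := T.headAt 0

/-- Arc set of a BHT whose span of leaf positions starts at `i`. -/
def BHT.arcsAt : BHT → ℕ → Set (ℕ × ℕ)
  | .leaf, _ => ∅
  | .nodeL l r, i =>
      insert (l.headAt i, r.headAt (i + l.numLeaves)) (l.arcsAt i ∪ r.arcsAt (i + l.numLeaves))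
  | .nodeR l r, i =>
      insert (r.headAt (i + l.numLeaves), l.headAt i) (l.arcsAt i ∪ r.arcsAt (i + l.numLeaves))

/-- Arc set of a BHT placed over positions `0, …, numLeaves - 1`. -/
def BHT.arcs (T : BHT) : Set (ℕ × ℕ) := T.arcsAt 0

/-- `S` is a subtree of `T` (placed over positions `0, …, numLeaves - 1`) whose
leaf span starts at absolute position `i`. -/
inductive BHT.SubtreeAt : BHT → ℕ → BHT → Prop
  | refl (T : BHT) : BHT.SubtreeAt T 0 T
  | inlL (l r S : BHT) (i : ℕ) : BHT.SubtreeAt l i S → BHT.SubtreeAt (BHT.nodeL l r) i S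
  | inrL (l r S : BHT) (i : ℕ) :
      BHT.SubtreeAt r i S → BHT.SubtreeAt (BHT.nodeL l r) (l.numLeaves + i) S
  | inlR (l r S : BHT) (i : ℕ) : BHT.SubtreeAt l i S → BHT.SubtreeAt (BHT.nodeR l r) i S
  | inrR (l r S : BHT) (i : ℕ) :
      BHT.SubtreeAt r i S → BHT.SubtreeAt (BHT.nodeR l r) (l.numLeaves + i) S

/-- `bht2dep T j = some i` if `i` is the unique position with `(i, j) ∈ arcs T`,
and `none` if `j` has no incoming arc. -/
noncomputable def bht2dep (n : ℕ) (T : BHT) : Fin n → Option (Fin n) := fun j =>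
  letI := Classical.dec (∃! i : Fin n, ((i : ℕ), (j : ℕ)) ∈ T.arcs)
  if h : ∃! i : Fin n, ((i : ℕ), (j : ℕ)) ∈ T.arcs then some h.choose else none

/-- `head` is a dependency tree on `n` words: exactly one root (position with
`head r = none`), and every position reaches the root by iterating `head`. -/
def IsDepTree {n : ℕ} (head : Fin n → Option (Fin n)) : Prop :=
  ∃ r : Fin n, head r = none ∧ (∀ r' : Fin n, head r' = none → r' = r) ∧
    ∀ j : Fin n, Relation.ReflTransGen (fun a b => head a = some b) j r

/-- A dependency tree is projective if every position's set of descendants is an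
interval of consecutive positions. -/
def Projective {n : ℕ} (head : Fin n → Option (Fin n)) : Prop :=
  ∀ i : Fin n, ∃ a b : Fin n,
    ∀ j : Fin n, Relation.ReflTransGen (fun x y => head x = some y) j i ↔ (a ≤ j ∧ j ≤ b)

/-- The six hexatags: `tL`/`tR` are terminal tags (leaf that is a left/right child);
`leftL`/`leftR` are `⇐L`/`⇐R` (internal left child with head-label L/R);
`rightL`/`rightR` are `⇒L`/`⇒R` (internal right child with head-label L/R). -/
inductive Hexatag : Type where
  | tL | tR | leftL | leftR | rightL | rightR
deriving DecidableEq

/-- A hexatag is terminal if it is `tL` or `tR`. -/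
def Hexatag.isTerminal : Hexatag → Prop
  | .tL => True
  | .tR => True
  | _ => False

/-- In-order linearization; the Boolean records whether the current subtree is a
right child of its parent (the root counts as a left child by convention). -/
def BHT.hexatagsAux : BHT → Bool → List Hexatag
  | .leaf, false => [.tL]
  | .leaf, true => [.tR]
  | .nodeL l r, b =>
      l.hexatagsAux false ++ (if b then Hexatag.rightL else Hexatag.leftL) :: r.hexatagsAux true
  | .nodeR l r, b =>
      l.hexatagsAux false ++ (if b then Hexatag.rightR else Hexatag.leftR) :: r.hexatagsAux true

/-- The hexatag linearization of a BHT. -/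
def BHT.hexatags (T : BHT) : List Hexatag := T.hexatagsAux false

/-- The tags emitted for the leaves of a BHT, in left-to-right order. -/
def BHT.leafTagsAux : BHT → Bool → List Hexatag
  | .leaf, false => [.tL]
  | .leaf, true => [.tR]
  | .nodeL l r, _ => l.leafTagsAux false ++ r.leafTagsAux true
  | .nodeR l r, _ => l.leafTagsAux false ++ r.leafTagsAux true

/-- The tags emitted for the leaves of a BHT in left-to-right order (root
counts as a left child by convention). -/
def BHT.leafTags (T : BHT) : List Hexatag := T.leafTagsAux false

/-- Partial BHTs: binary head trees possibly containing a dummy placeholder. -/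
inductive PBHT : Type where
  | dummy : PBHT
  | leaf : PBHT
  | nodeL (l r : PBHT) : PBHT
  | nodeR (l r : PBHT) : PBHT
deriving DecidableEq

/-- Does a partial BHT contain a dummy? -/
def PBHT.hasDummy : PBHT → Bool
  | .dummy => true
  | .leaf => false
  | .nodeL l r => l.hasDummy || r.hasDummy
  | .nodeR l r => l.hasDummy || r.hasDummy

/-- Substitute `u` for the dummy in a partial BHT. -/
def PBHT.subst : PBHT → PBHT → PBHT
  | .dummy, u => u
  | .leaf, _ => .leaf
  | .nodeL l r, u => .nodeL (l.subst u) (r.subst u)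
  | .nodeR l r, u => .nodeR (l.subst u) (r.subst u)

/-- One step of the left-corner decoder on a stack of partial BHTs. -/
def hexStep : List PBHT → Hexatag → Option (List PBHT)
  | st, .tL => some (.leaf :: st)
  | t :: st, .tR => if t.hasDummy then some (t.subst .leaf :: st) else none
  | t :: st, .leftL => some (.nodeL t .dummy :: st)
  | t :: st, .leftR => some (.nodeR t .dummy :: st)
  | t :: u :: st, .rightL =>
      if u.hasDummy then some (u.subst (.nodeL t .dummy) :: st) else none
  | t :: u :: st, .rightR =>
      if u.hasDummy then some (u.subst (.nodeR t .dummy) :: st) else none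
  | _, _ => none

/-- The left-corner decoder: run the stack operations; succeed iff every
operation is defined and the final stack is a single dummy-free tree. -/
def tags2bht (τ : List Hexatag) : Option PBHT :=
  match τ.foldlM hexStep ([] : List PBHT) with
  | some [t] => if t.hasDummy then none else some t
  | _ => none

/-- Embedding of BHTs into partial BHTs. -/
def BHT.toPBHT : BHT → PBHT
  | .leaf => .leaf
  | .nodeL l r => .nodeL l.toPBHT r.toPBHT
  | .nodeR l r => .nodeR l.toPBHT r.toPBHT

/-- Stack-count increment of a hexatag. -/
def Hexatag.delta : Hexatag → ℤ
  | .tL => 1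
  | .tR => 0
  | .leftL => 0
  | .leftR => 0
  | .rightL => -1
  | .rightR => -1

/-- Running stack count `sₖ` after the first `k` tags of `τ`. -/
def stackCount (τ : List Hexatag) (k : ℕ) : ℤ :=
  ((τ.take k).map Hexatag.delta).sum

/-- Validity of a hexatag list (0-indexed: Lean index `k` is 1-indexed position `k+1`). -/
def ValidTags (τ : List Hexatag) : Prop :=
  (τ.length % 2 = 1 ∧
    ∀ k : ℕ, ∀ t : Hexatag, τ[k]? = some t →
      (k % 2 = 0 → t.isTerminal) ∧ (k % 2 = 1 → ¬ t.isTerminal)) ∧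
  τ[0]? = some Hexatag.tL ∧
  (∀ k : ℕ, ∀ t : Hexatag, τ[k]? = some t →
    (t = Hexatag.rightL ∨ t = Hexatag.rightR) → 2 ≤ stackCount τ k) ∧
  stackCount τ τ.length = 1

theorem BHT.headAt_mem (S : BHT) : ∀ i : ℕ, i ≤ S.headAt i ∧ S.headAt i < i + S.numLeaves := by
  induction S with
  | leaf => intro i; simp [BHT.headAt, BHT.numLeaves]
  | nodeL l r ihl ihr =>
    intro i
    have h1 := ihl i
    simp only [BHT.headAt, BHT.numLeaves]
    omega
  | nodeR l r ihl ihr =>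
    intro i
    have h1 := ihr (i + l.numLeaves)
    simp only [BHT.headAt, BHT.numLeaves]
    omega

/-- Every arc target lies in the span and differs from the head. -/
theorem BHT.arcsAt_target (S : BHT) : ∀ i q p : ℕ, (q, p) ∈ S.arcsAt i →
    i ≤ p ∧ p < i + S.numLeaves ∧ p ≠ S.headAt i := by
  induction S with
  | leaf => intro i q p h; simp [BHT.arcsAt] at h
  | nodeL l r ihl ihr =>
    intro i q p h
    have h1 := l.headAt_mem i
    have h2 := r.headAt_mem (i + l.numLeaves)
    simp only [BHT.arcsAt, Set.mem_insert_iff, Set.mem_union, Prod.mk.injEq] at h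
    simp only [BHT.headAt, BHT.numLeaves]
    rcases h with h | h | h
    · omega
    · have := ihl _ _ _ h
      omega
    · have := ihr _ _ _ h
      omega
  | nodeR l r ihl ihr =>
    intro i q p h
    have h1 := l.headAt_mem i
    have h2 := r.headAt_mem (i + l.numLeaves)
    simp only [BHT.arcsAt, Set.mem_insert_iff, Set.mem_union, Prod.mk.injEq] at h
    simp only [BHT.headAt, BHT.numLeaves]
    rcases h with h | h | h
    · omega
    · have := ihl _ _ _ h
      omega
    · have := ihr _ _ _ h
      omega

theorem BHT.arcsAt_unique (S : BHT) : ∀ i q q' p : ℕ, (q, p) ∈ S.arcsAt i →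
    (q', p) ∈ S.arcsAt i → q = q' := by
  induction S with
  | leaf => intro i q q' p h; simp [BHT.arcsAt] at h
  | nodeL l r ihl ihr =>
    intro i q q' p h h'
    have h1 := l.headAt_mem i
    have h2 := r.headAt_mem (i + l.numLeaves)
    have tl := l.arcsAt_target i
    have tr := r.arcsAt_target (i + l.numLeaves)
    simp only [BHT.arcsAt, Set.mem_insert_iff, Set.mem_union, Prod.mk.injEq] at h h'
    rcases h with h | h | h <;> rcases h' with h' | h' | h' <;>
      first
      | omega
      | exact ihl _ _ _ _ h h'
      | exact ihr _ _ _ _ h h'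
      | (have a := tl _ _ h; have b := tr _ _ h'; omega)
      | (have a := tr _ _ h; have b := tl _ _ h'; omega)
      | (have a := tl _ _ h; omega)
      | (have a := tr _ _ h; omega)
      | (have a := tl _ _ h'; omega)
      | (have a := tr _ _ h'; omega)
  | nodeR l r ihl ihr =>
    intro i q q' p h h'
    have h1 := l.headAt_mem i
    have h2 := r.headAt_mem (i + l.numLeaves)
    have tl := l.arcsAt_target i
    have tr := r.arcsAt_target (i + l.numLeaves)
    simp only [BHT.arcsAt, Set.mem_insert_iff, Set.mem_union, Prod.mk.injEq] at h h'
    rcases h with h | h | h <;> rcases h' with h' | h' | h' <;>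
      first
      | omega
      | exact ihl _ _ _ _ h h'
      | exact ihr _ _ _ _ h h'
      | (have a := tl _ _ h; have b := tr _ _ h'; omega)
      | (have a := tr _ _ h; have b := tl _ _ h'; omega)
      | (have a := tl _ _ h; omega)
      | (have a := tr _ _ h; omega)
      | (have a := tl _ _ h'; omega)
      | (have a := tr _ _ h'; omega)

theorem BHT.arcsAt_reach (S : BHT) : ∀ i p : ℕ, i ≤ p → p < i + S.numLeaves →
    Relation.ReflTransGen (fun a b => (b, a) ∈ S.arcsAt i) p (S.headAt i) := by
  induction S with
  | leaf =>
    intro i p h1 h2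
    simp only [BHT.numLeaves] at h2
    obtain rfl : p = i := by omega
    exact Relation.ReflTransGen.refl
  | nodeL l r ihl ihr =>
    intro i p h1 h2
    simp only [BHT.numLeaves] at h2
    by_cases hp : p < i + l.numLeaves
    · exact Relation.ReflTransGen.mono (fun a b h => Or.inr (Or.inl h)) _ _
        (ihl i p h1 hp)
    · exact Relation.ReflTransGen.tail
        (Relation.ReflTransGen.mono (fun a b h => Or.inr (Or.inr h)) _ _
        (ihr (i + l.numLeaves) p (by omega) (by omega)))
        (Or.inl rfl)
  | nodeR l r ihl ihr =>
    intro i p h1 h2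
    simp only [BHT.numLeaves] at h2
    by_cases hp : p < i + l.numLeaves
    · exact Relation.ReflTransGen.tail
        (Relation.ReflTransGen.mono (fun a b h => Or.inr (Or.inl h)) _ _
        (ihl i p h1 hp)) (Or.inl rfl)
    · exact Relation.ReflTransGen.mono (fun a b h => Or.inr (Or.inr h)) _ _
        (ihr (i + l.numLeaves) p (by omega) (by omega))

theorem subtree_arcs_isDepTree (T S : BHT) (i j : ℕ) (hS : BHT.SubtreeAt T i S)
    (hj : i + S.numLeaves = j + 1) :
    (i ≤ S.headAt i ∧ S.headAt i ≤ j) ∧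
    (∀ p : ℕ, i ≤ p → p ≤ j → p ≠ S.headAt i → ∃! q : ℕ, (q, p) ∈ S.arcsAt i) ∧
    (∀ p : ℕ, i ≤ p → p ≤ j →
      Relation.ReflTransGen (fun a b => (b, a) ∈ S.arcsAt i) p (S.headAt i)) := by
  have hh := S.headAt_mem i
  refine ⟨by omega, ?_, fun p h1 h2 => S.arcsAt_reach i p h1 (by omega)⟩
  intro p h1 h2 hne
  rcases Relation.ReflTransGen.cases_head (S.arcsAt_reach i p h1 (by omega)) with h | ⟨q, h, _⟩
  · exact absurd h hne
  · exact ⟨q, h, fun q' h' => S.arcsAt_unique i q' q p h' h⟩
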